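/- There exist a prime p₀ > 3 and a constant C > 0 with the following property. Let p ≥ p₀ be a prime and let c_1,…,c_16, d_1,…,d_16 be integers such that: (a) if p ≡ 1 (mod 3), then for every (λ,μ) ∈ (ℤ/pℤ)² with (λ,μ) ≠ (0,0) the number of indices i with λc_i + μd_i ≡ 0 (mod p) is at most 9; and (b) if p ≡ 2 (mod 3), then there exist indices i, j, k such that c_id_j − c_jd_i, c_id_k − c_kd_i and c_jd_k − c_kd_j are all nonzero modulo p. Then for every integer k ≥ 1, ρ(p^k) ≥ p^{14k}·(1 − C/p). -/

import Mathlib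

/-!
Let `φ : R → F` be a surjection onto a finite field whose kernel consists of nilpotents. A zero
over `F` at which the Jacobian matrix has full rank lifts to `R` by Hensel's lemma: the coefficient
columns at its nonzero coordinates span, so any lift can be corrected there by extracting `n`-th
roots, which shows that each such zero has at least the expected number of lifts. It remains to
count over `F`. There the zeros are counted by a sum, over linear combinations of the forms, of
products of the sums `∑ x, ψ (t * x ^ n)`. For `t ≠ 0` these are `O(√q)`, because they are constant
on the orbit of `t` under `n`-th powers while their mean square is `O(q)`; when the `n`-th power map
is a bijection, they vanish. The zeros at which the Jacobian matrix degenerates are negligible: they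
have many vanishing coordinates or, in the bijective case, lie on one of a few coordinate
hyperplanes, each of which contains few zeros.
-/

open Finset Matrix

section Definitions

variable {R F ι κ : Type*} [CommRing R] [Field F] [Fintype F] [Fintype ι]

/-- The common zeros of the diagonal forms `∑ i, A k i * x i ^ n`, one for each row of `A`. -/
def diagonalZeros (A : Matrix κ ι R) (n : ℕ) : Set (ι → R) :=
  {x | A *ᵥ x ^ n = 0}

/-- The columns of `A` indexed by `S` span the whole space, expressed dually: no nonzero
functional kills all of them. -/
def ColumnsSpan [Fintype κ] (A : Matrix κ ι R) (S : Set ι) : Prop :=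
  ∀ w : κ → R, (∀ i ∈ S, (w ᵥ* A) i = 0) → w = 0

/-- The common zeros at which the Jacobian matrix has full rank. For `n` invertible in a field this
matrix is, up to nonzero scaling of columns, the part of `A` indexed by the support of `x`. -/
def nonsingularZeros [Fintype κ] (A : Matrix κ ι R) (n : ℕ) : Set (ι → R) :=
  {x ∈ diagonalZeros A n | ColumnsSpan A (Function.support x)}

/-- The hypothesis on a system over `𝔽_q` that makes its number of zeros close to the expected one:
either every nonzero combination of the forms involves enough variables, or the `n`-th power map is
a bijection of `𝔽_q` and some spanning set of columns has no column that is indispensable for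
spanning. It stands for the paper's conditions of good type. -/
def GoodType [Fintype κ] (A : Matrix κ ι F) (n : ℕ) : Prop :=
  (∀ w : κ → F, w ≠ 0 →
    Nat.card {i // (w ᵥ* A) i = 0} + 2 * (Fintype.card κ + 1) ≤ Fintype.card ι) ∨
  n.Coprime (Fintype.card F - 1) ∧
    ∃ J : Finset ι, ColumnsSpan A J ∧ ∀ j ∈ J, ColumnsSpan A {j}ᶜ

end Definitions

section Spanning

variable {F ι κ : Type*} [Field F] {A : Matrix κ ι F} {n : ℕ}

theorem diagonalZeros_fromRows_single [Fintype ι] [DecidableEq ι] (hn : n ≠ 0) (j : ι) :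
    diagonalZeros (A.fromRows (replicateRow Unit (Pi.single j 1))) n =
      {x ∈ diagonalZeros A n | x j = 0} := by
  ext x
  simp [diagonalZeros, fromRows_mulVec, funext_iff, hn, mulVec, replicateRow]

variable [Fintype κ] {S T : Set ι}

theorem ColumnsSpan.mono (h : ColumnsSpan A S) (hST : S ⊆ T) : ColumnsSpan A T :=
  fun w hw ↦ h w fun i hi ↦ hw i (hST hi)

theorem columnsSpan_of_det_ne_zero [DecidableEq κ] {e : κ → ι} (he : ∀ k, e k ∈ S)
    (hdet : (A.submatrix id e).det ≠ 0) : ColumnsSpan A S := fun _ hw ↦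
  eq_zero_of_vecMul_eq_zero hdet <| funext fun k ↦ hw (e k) (he k)

theorem ColumnsSpan.exists_rightInverse [Fintype ι] [DecidableEq κ] (h : ColumnsSpan A S) :
    ∃ B : Matrix ι κ F, A * B = 1 ∧ ∀ i ∉ S, B i = 0 := by
  classical
  let D : Matrix ι ι F := diagonal (S.indicator 1)
  have hker : LinearMap.ker (A * D)ᵀ.mulVecLin = ⊥ := by
    refine LinearMap.ker_eq_bot'.2 fun w hw ↦ h w fun i hi ↦ ?_
    rw [mulVecLin_apply, mulVec_transpose, ← vecMul_vecMul] at hw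
    simpa [D, vecMul_diagonal, hi] using congrFun hw i
  obtain ⟨g, hg⟩ := LinearMap.exists_leftInverse_of_injective _ hker
  have hinv : (A * D) * (LinearMap.toMatrix' g)ᵀ = 1 := by
    have hg' := congrArg LinearMap.toMatrix' hg
    rw [← toLin'_apply', LinearMap.toMatrix'_comp, LinearMap.toMatrix'_toLin',
      LinearMap.toMatrix'_id] at hg'
    rw [← transpose_inj, transpose_mul, transpose_transpose, hg', transpose_one]
  refine ⟨D * (LinearMap.toMatrix' g)ᵀ, by rw [← Matrix.mul_assoc, hinv], fun i hi ↦ ?_⟩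
  ext k
  simp [D, diagonal_mul, hi]

theorem ColumnsSpan.fromRows_single [DecidableEq ι] {j : ι} (hA : ColumnsSpan A {j}ᶜ) :
    ColumnsSpan (A.fromRows (replicateRow Unit (Pi.single j 1))) Set.univ := by
  intro w hw
  simp only [vecMul_fromRows, Pi.add_apply, Set.mem_univ, forall_const] at hw
  have hinl : w ∘ Sum.inl = 0 := hA _ fun i hi ↦ by
    simpa [vecMul, dotProduct, replicateRow, Pi.single_eq_of_ne hi] using hw i
  have hinr : w (Sum.inr ()) = 0 := by
    rw [hinl, zero_vecMul] at hw
    simpa [vecMul, dotProduct] using hw j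
  funext k
  rcases k with k | _
  · exact congrFun hinl k
  · exact hinr

end Spanning

section Lifting

variable {R F ι κ : Type*} [CommRing R] [Field F] {φ : R →+* F} {n : ℕ}

theorem isLocalHom_of_ker_le_nilradical (hφ : Function.Surjective φ)
    (hker : RingHom.ker φ ≤ nilradical R) : IsLocalHom φ where
  map_nonunit x hx := by
    obtain ⟨y, hy⟩ := hφ (φ x)⁻¹
    have hxy : IsNilpotent (x * y - 1) := hker <| by
      simp [RingHom.mem_ker, hy, mul_inv_cancel₀ hx.ne_zero]
    have hunit := hxy.isUnit_add_one
    rw [sub_add_cancel] at hunit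
    exact isUnit_of_mul_isUnit_left hunit

theorem existsUnique_pow_eq_of_map_eq [IsLocalHom φ] (hker : RingHom.ker φ ≤ nilradical R)
    (hn : (n : F) ≠ 0) {x v : R} (hx : φ x ≠ 0) (hv : φ v = φ x ^ n) :
    ∃! y, φ y = φ x ∧ y ^ n = v := by
  let P : Polynomial R := Polynomial.X ^ n - Polynomial.C v
  have hderiv : IsUnit (Polynomial.aeval x (Polynomial.derivative P)) := by
    refine isUnit_of_map_unit φ _ (Ne.isUnit ?_)
    simp [P, hn, hx, Polynomial.derivative_X_pow]
  have hroot : IsNilpotent (Polynomial.aeval x P) := hker <| by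
    simp [P, RingHom.mem_ker, hv]
  refine (existsUnique_congr fun y ↦ ?_).1
    (Polynomial.existsUnique_nilpotent_sub_and_aeval_eq_zero hroot hderiv)
  have hnil : IsNilpotent (x - y) ↔ φ y = φ x := by
    refine ⟨fun h ↦ ?_, fun h ↦ hker ?_⟩
    · exact (sub_eq_zero.1 (by simpa using (h.map φ).eq_zero)).symm
    · simp [RingHom.mem_ker, h]
  simp [hnil, P, sub_eq_zero]

theorem ColumnsSpan.exists_rightInverse_lift [Fintype ι] [Fintype κ] [DecidableEq κ]
    [IsLocalHom φ] (hφ : Function.Surjective φ) {A : Matrix κ ι R} {S : Set ι}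
    (h : ColumnsSpan (A.map φ) S) : ∃ B : Matrix ι κ R, A * B = 1 ∧ ∀ i ∉ S, B i = 0 := by
  classical
  obtain ⟨B, hAB, hB⟩ := h.exists_rightInverse
  obtain ⟨lift, hlift⟩ := hφ.hasRightInverse
  let B' : Matrix ι κ R := of fun i ↦ if i ∈ S then lift ∘ B i else 0
  have hB' : B'.map φ = B := by
    ext i k
    by_cases hi : i ∈ S <;> simp [B', hi, hlift _, hB]
  have hdet : IsUnit (A * B').det := by
    refine isUnit_of_map_unit φ _ ?_
    rw [RingHom.map_det, RingHom.mapMatrix_apply, Matrix.map_mul, hB', hAB, det_one]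
    exact isUnit_one
  refine ⟨B' * (A * B')⁻¹, by rw [← Matrix.mul_assoc, mul_nonsing_inv _ hdet], fun i hi ↦ ?_⟩
  ext k
  simp [mul_apply, B', hi]

/-- On coordinates that vanish modulo `ker φ` the `n`-th power map is not injective, so there
nothing may be changed. -/
theorem exists_pow_eq_pow_sub [IsLocalHom φ] (hker : RingHom.ker φ ≤ nilradical R)
    (hn : (n : F) ≠ 0) (y : ι → R) {v : ι → R} (hv : ∀ i, φ (v i) = 0)
    (hv₀ : ∀ i, φ (y i) = 0 → v i = 0) :
    ∃ z : ι → R, φ ∘ z = φ ∘ y ∧ z ^ n = y ^ n - v ∧ ∀ i, φ (y i) = 0 → z i = y i := by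
  have hcoord (i : ι) :
      ∃ z, φ z = φ (y i) ∧ z ^ n = y i ^ n - v i ∧ (φ (y i) = 0 → z = y i) := by
    by_cases hy : φ (y i) = 0
    · exact ⟨y i, rfl, by rw [hv₀ i hy, sub_zero], fun _ ↦ rfl⟩
    · obtain ⟨z, ⟨hzy, hz⟩, -⟩ := existsUnique_pow_eq_of_map_eq (v := y i ^ n - v i) hker hn hy
        (by rw [map_sub, map_pow, hv, sub_zero])
      exact ⟨z, hzy, hz, fun h ↦ absurd h hy⟩
  choose z hzy hz hz₀ using hcoord
  exact ⟨z, funext hzy, funext hz, hz₀⟩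

theorem eq_of_pow_eq_of_map_eq [IsLocalHom φ] (hker : RingHom.ker φ ≤ nilradical R)
    (hn : (n : F) ≠ 0) {y z : ι → R} (hφ : φ ∘ y = φ ∘ z) (hpow : y ^ n = z ^ n)
    (h₀ : ∀ i, φ (y i) = 0 → y i = z i) : y = z := by
  funext i
  by_cases hy : φ (y i) = 0
  · exact h₀ i hy
  · refine (existsUnique_pow_eq_of_map_eq (v := y i ^ n) hker hn hy (map_pow φ _ n)).unique
      ⟨rfl, rfl⟩ ⟨(congrFun hφ i).symm, (congrFun hpow i).symm⟩

variable [Fintype ι]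

theorem map_mulVec_pow (A : Matrix κ ι R) (y : ι → R) :
    φ ∘ (A *ᵥ y ^ n) = A.map φ *ᵥ (φ ∘ y) ^ n := by
  funext k
  simp [φ.map_mulVec, Function.comp_def, Pi.pow_def]

/-- The solutions with a given nonsingular reduction are all obtained by correcting arbitrary lifts
`y` to solutions `z`, where `z ^ n = y ^ n - B * (A * y ^ n)` for a right inverse `B` of `A`; the
pair of `z` and the error `A * y ^ n` determines `y`. -/
theorem card_lifts_nonsingularZeros_le [Finite R] [Fintype κ] [IsLocalHom φ]
    (hφ : Function.Surjective φ) (hker : RingHom.ker φ ≤ nilradical R) (hn : (n : F) ≠ 0)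
    (A : Matrix κ ι R) :
    Nat.card {y : ι → R // φ ∘ y ∈ nonsingularZeros (A.map φ) n} ≤
      Nat.card (diagonalZeros A n) * Nat.card (RingHom.ker φ) ^ Fintype.card κ := by
  classical
  choose B hAB hB using fun x : nonsingularZeros (A.map φ) n ↦ x.2.2.exists_rightInverse_lift hφ
  have herr (y : {y : ι → R // φ ∘ y ∈ nonsingularZeros (A.map φ) n}) (k : κ) :
      (A *ᵥ y.1 ^ n) k ∈ RingHom.ker φ :=
    congrFun ((map_mulVec_pow A y.1).trans y.2.1) k
  choose z hzy hz hz₀ using fun y : {y : ι → R // φ ∘ y ∈ nonsingularZeros (A.map φ) n} ↦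
    exists_pow_eq_pow_sub hker hn y.1 (v := B ⟨_, y.2⟩ *ᵥ (A *ᵥ y.1 ^ n))
      (fun i ↦ Ideal.sum_mem (RingHom.ker φ) fun k _ ↦ Ideal.mul_mem_left _ _ (herr y k))
      (fun i hi ↦ by
        rw [mulVec, hB ⟨_, y.2⟩ i (by simpa using hi), zero_dotProduct])
  have hzero (y) : z y ∈ diagonalZeros A n := by
    change A *ᵥ z y ^ n = 0
    rw [hz, mulVec_sub, mulVec_mulVec, hAB, one_mulVec, sub_self]
  let f (y : {y : ι → R // φ ∘ y ∈ nonsingularZeros (A.map φ) n}) :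
      diagonalZeros A n × (κ → RingHom.ker φ) :=
    (⟨z y, hzero y⟩, fun k ↦ ⟨(A *ᵥ y.1 ^ n) k, herr y k⟩)
  have hf : Function.Injective f := by
    intro y y' hyy'
    have hzz' : z y = z y' := congrArg (fun q ↦ q.1.1) hyy'
    have herr' : A *ᵥ y.1 ^ n = A *ᵥ y'.1 ^ n :=
      funext fun k ↦ congrArg (fun q ↦ (q.2 k).1) hyy'
    have hred : φ ∘ y.1 = φ ∘ y'.1 := by rw [← hzy y, ← hzy y', hzz']
    refine Subtype.ext (eq_of_pow_eq_of_map_eq hker hn hred ?_ fun i hi ↦ ?_)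
    · have hpow := (hz y).symm.trans ((congrArg (· ^ n) hzz').trans (hz y'))
      simpa only [herr', hred, sub_left_inj] using hpow
    · rw [← hz₀ y i hi, hzz', hz₀ y' i ((congrFun hred i).symm.trans hi)]
  simpa [Nat.card_prod, Nat.card_pi] using Nat.card_le_card_of_injective f hf

theorem card_eq_card_ker_mul_card (hφ : Function.Surjective φ) :
    Nat.card R = Nat.card (RingHom.ker φ) * Nat.card F := by
  rw [(RingHom.ker φ).toAddSubgroup.card_eq_card_quotient_mul_card_addSubgroup, mul_comm]
  congr 1
  exact Nat.card_congr (RingHom.quotientKerEquivOfSurjective hφ).toEquiv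

theorem card_ker_pow_mul_card_le_card_preimage [Finite R] (hφ : Function.Surjective φ)
    (T : Set (ι → F)) :
    Nat.card (RingHom.ker φ) ^ Fintype.card ι * Nat.card T ≤ Nat.card {y : ι → R // φ ∘ y ∈ T} := by
  obtain ⟨lift, hlift⟩ := hφ.hasRightInverse
  have hred (v : ι → RingHom.ker φ) (x : T) : φ ∘ (lift ∘ x.1 + fun i ↦ (v i).1) = x.1 := by
    funext i
    simp [hlift _, RingHom.mem_ker.1 (v i).2]
  let f (q : (ι → RingHom.ker φ) × T) : {y : ι → R // φ ∘ y ∈ T} :=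
    ⟨lift ∘ q.2.1 + fun i ↦ (q.1 i).1, by rw [hred]; exact q.2.2⟩
  have hf : Function.Injective f := by
    rintro ⟨v, x⟩ ⟨v', x'⟩ h
    replace h : (lift ∘ x.1 + fun i ↦ (v i).1) = lift ∘ x'.1 + fun i ↦ (v' i).1 :=
      congrArg Subtype.val h
    obtain rfl : x = x' := Subtype.ext <| by rw [← hred v x, ← hred v' x', h]
    congr 1
    funext i
    simpa using congrFun h i
  simpa [Nat.card_prod, Nat.card_pi] using Nat.card_le_card_of_injective f hf

end Lifting

section PowerMap

variable {F : Type*} [Field F] [Fintype F] {n : ℕ}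

theorem card_filter_pow_eq_le [DecidableEq F] (hn : n ≠ 0) (a : F) : #{x | x ^ n = a} ≤ n :=
  calc #{x | x ^ n = a} ≤ #(Polynomial.nthRoots n a).toFinset :=
        card_le_card fun x hx ↦ by
          simpa [Polynomial.mem_nthRoots hn.pos] using hx
    _ ≤ Multiset.card (Polynomial.nthRoots n a) := Multiset.toFinset_card_le _
    _ ≤ n := Polynomial.card_nthRoots n a

theorem pow_bijective_of_coprime (hn : n ≠ 0) (h : n.Coprime (Fintype.card F - 1)) :
    Function.Bijective fun x : F ↦ x ^ n := by
  rw [Nat.coprime_comm, ← Nat.card_eq_fintype_card, ← Nat.card_units] at h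
  refine Function.Injective.bijective_of_finite fun x y (hxy : x ^ n = y ^ n) ↦ ?_
  obtain rfl | hx := eq_or_ne x 0
  · rw [zero_pow hn] at hxy
    exact (pow_eq_zero_iff hn).1 hxy.symm |>.symm
  · have hy : y ≠ 0 := by
      rintro rfl
      exact hx (by simpa [hn] using hxy)
    have hunits : Units.mk0 x hx = Units.mk0 y hy :=
      h.pow_left_bijective.injective (Units.ext (by simpa using hxy))
    exact congrArg Units.val hunits

end PowerMap

section CharacterSums

variable {F ι κ : Type*} [Field F] {n : ℕ} {ψ : AddChar F ℂ}

theorem addChar_map_sum [Fintype ι] (ψ : AddChar F ℂ) (f : ι → F) :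
    ψ (∑ i, f i) = ∏ i, ψ (f i) :=
  map_prod ψ.toMonoidHom (fun i ↦ Multiplicative.ofAdd (f i)) univ

variable [Fintype F]

/-- The complete exponential sum `∑ x, ψ (t * x ^ n)`. -/
noncomputable def monomialSum (ψ : AddChar F ℂ) (n : ℕ) (t : F) : ℂ :=
  ∑ x, ψ (t * x ^ n)

theorem monomialSum_zero (ψ : AddChar F ℂ) (n : ℕ) :
    monomialSum ψ n 0 = Fintype.card F := by
  simp [monomialSum]

theorem monomialSum_mul_pow (ψ : AddChar F ℂ) (n : ℕ) (t : F) {u : F} (hu : u ≠ 0) :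
    monomialSum ψ n (t * u ^ n) = monomialSum ψ n t :=
  Fintype.sum_equiv (Equiv.mulLeft₀ u hu) _ _ fun x ↦ by
    rw [Equiv.mulLeft₀_apply, mul_pow, mul_assoc]

theorem sum_norm_sq_monomialSum [DecidableEq F] (hψ : ψ.IsPrimitive) (n : ℕ) :
    ∑ t, ‖monomialSum ψ n t‖ ^ 2 = Fintype.card F * ∑ y : F, #{x : F | x ^ n = y ^ n} := by
  have hnorm (t : F) : ((‖monomialSum ψ n t‖ : ℂ)) ^ 2 = ∑ y, ∑ x, ψ (t * (x ^ n - y ^ n)) := by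
    rw [← Complex.mul_conj', monomialSum, map_sum, mul_sum]
    refine sum_congr rfl fun y _ ↦ ?_
    rw [sum_mul]
    refine sum_congr rfl fun x _ ↦ ?_
    rw [← AddChar.map_neg_eq_conj, ← AddChar.map_add_eq_mul, mul_sub, sub_eq_add_neg]
  apply Complex.ofReal_injective
  push_cast
  simp_rw [hnorm]
  rw [sum_comm, mul_sum]
  refine sum_congr rfl fun y _ ↦ ?_
  rw [sum_comm]
  simp_rw [AddChar.sum_mulShift _ hψ, sub_eq_zero]
  simp [sum_ite, mul_comm]

theorem sum_norm_sq_monomialSum_le (hψ : ψ.IsPrimitive) (hn : n ≠ 0) :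
    ∑ t, ‖monomialSum ψ n t‖ ^ 2 ≤ n * (Fintype.card F : ℝ) ^ 2 := by
  classical
  calc ∑ t, ‖monomialSum ψ n t‖ ^ 2
      = Fintype.card F * ((∑ y : F, #{x : F | x ^ n = y ^ n} : ℕ) : ℝ) := by
        rw [sum_norm_sq_monomialSum hψ]
    _ ≤ Fintype.card F * ((∑ _y : F, n : ℕ) : ℝ) := by
        gcongr with y
        exact card_filter_pow_eq_le hn _
    _ = n * (Fintype.card F : ℝ) ^ 2 := by
        rw [sum_const, card_univ, smul_eq_mul]
        push_cast
        ring

/-- The sum takes the same value on the whole orbit of `t` under `n`-th powers, so a single value is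
controlled by the mean square. -/
theorem card_sub_one_mul_norm_sq_monomialSum_le (ψ : AddChar F ℂ) (hn : n ≠ 0) {t : F}
    (ht : t ≠ 0) :
    ((Fintype.card F : ℝ) - 1) * ‖monomialSum ψ n t‖ ^ 2 ≤
      n * ∑ s, ‖monomialSum ψ n s‖ ^ 2 := by
  classical
  have hfiber (s : F) : #{u : F | t * u ^ n = s} ≤ n := by
    simpa only [eq_div_iff ht, mul_comm t] using card_filter_pow_eq_le hn (s / t)
  calc ((Fintype.card F : ℝ) - 1) * ‖monomialSum ψ n t‖ ^ 2
      = ∑ u ∈ univ.erase 0, ‖monomialSum ψ n (t * u ^ n)‖ ^ 2 := by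
        rw [sum_congr rfl fun u hu ↦ by rw [monomialSum_mul_pow ψ n t (ne_of_mem_erase hu)],
          sum_const, nsmul_eq_mul, card_erase_of_mem (mem_univ _), card_univ,
          Nat.cast_sub Fintype.card_pos, Nat.cast_one]
    _ ≤ ∑ u, ‖monomialSum ψ n (t * u ^ n)‖ ^ 2 :=
        sum_le_univ_sum_of_nonneg fun _ ↦ sq_nonneg _
    _ = ∑ s, #{u : F | t * u ^ n = s} * ‖monomialSum ψ n s‖ ^ 2 := by
        rw [← sum_fiberwise univ fun u ↦ t * u ^ n]
        refine sum_congr rfl fun s _ ↦ ?_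
        rw [sum_congr rfl fun u hu ↦ by rw [(mem_filter.1 hu).2], sum_const, nsmul_eq_mul]
    _ ≤ ∑ s, n * ‖monomialSum ψ n s‖ ^ 2 := by
        gcongr with s
        exact hfiber s
    _ = n * ∑ s, ‖monomialSum ψ n s‖ ^ 2 := (mul_sum ..).symm

theorem norm_monomialSum_le (hψ : ψ.IsPrimitive) (hn : n ≠ 0) {t : F} (ht : t ≠ 0) :
    ‖monomialSum ψ n t‖ ≤ 2 * n * √(Fintype.card F) := by
  have hq : (2 : ℝ) ≤ Fintype.card F := by exact_mod_cast Fintype.one_lt_card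
  have hmoment : ((Fintype.card F : ℝ) - 1) * ‖monomialSum ψ n t‖ ^ 2 ≤
      (n * Fintype.card F) ^ 2 := by
    have := mul_le_mul_of_nonneg_left (sum_norm_sq_monomialSum_le hψ hn) n.cast_nonneg
    linarith [card_sub_one_mul_norm_sq_monomialSum_le ψ hn ht]
  refine abs_le_of_sq_le_sq' ?_ (by positivity) |>.2
  rw [mul_pow, Real.sq_sqrt (Nat.cast_nonneg _)]
  have hhalf : (Fintype.card F : ℝ) / 2 * ‖monomialSum ψ n t‖ ^ 2 ≤
      (n * Fintype.card F) ^ 2 :=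
    (mul_le_mul_of_nonneg_right (by linarith) (sq_nonneg _)).trans hmoment
  refine le_of_mul_le_mul_left (a := (Fintype.card F : ℝ) / 2) ?_ (by positivity)
  nlinarith

theorem monomialSum_eq_zero (hψ : ψ.IsPrimitive)
    (hn : Function.Bijective fun x : F ↦ x ^ n) {t : F} (ht : t ≠ 0) : monomialSum ψ n t = 0 := by
  classical
  calc monomialSum ψ n t = ∑ x, ψ (x * t) :=
        Fintype.sum_bijective _ hn _ _ fun x ↦ by rw [mul_comm]
    _ = 0 := by rw [AddChar.sum_mulShift _ hψ, if_neg ht, Nat.cast_zero]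

theorem sum_addChar_dotProduct [Fintype κ] [DecidableEq κ] [DecidableEq F] (hψ : ψ.IsPrimitive)
    (v : κ → F) :
    ∑ w : κ → F, ψ (w ⬝ᵥ v) = if v = 0 then (Fintype.card F : ℂ) ^ Fintype.card κ else 0 := by
  calc ∑ w : κ → F, ψ (w ⬝ᵥ v) = ∏ k, ∑ a, ψ (a * v k) := by
        rw [Fintype.prod_sum]
        exact sum_congr rfl fun w _ ↦ addChar_map_sum ψ _
    _ = _ := by
        simp_rw [AddChar.sum_mulShift _ hψ]
        push_cast
        rw [Fintype.prod_ite_zero]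
        simp [funext_iff]

variable [Fintype ι] [Fintype κ]

theorem card_diagonalZeros_mul_eq_sum [DecidableEq κ] (hψ : ψ.IsPrimitive) (A : Matrix κ ι F)
    (n : ℕ) :
    (Nat.card (diagonalZeros A n) : ℂ) * Fintype.card F ^ Fintype.card κ =
      ∑ w : κ → F, ∏ i, monomialSum ψ n ((w ᵥ* A) i) := by
  classical
  have hprod (w : κ → F) :
      ∏ i, monomialSum ψ n ((w ᵥ* A) i) = ∑ x : ι → F, ψ (w ⬝ᵥ A *ᵥ x ^ n) := by
    simp_rw [monomialSum]
    rw [Fintype.prod_sum]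
    refine sum_congr rfl fun x _ ↦ ?_
    rw [dotProduct_mulVec, dotProduct, addChar_map_sum]
    rfl
  simp_rw [hprod]
  rw [sum_comm]
  simp_rw [sum_addChar_dotProduct hψ]
  rw [← sum_filter, sum_const, nsmul_eq_mul, ← Fintype.card_subtype,
    ← Nat.card_eq_fintype_card (α := {x // A *ᵥ x ^ n = 0})]
  rfl

theorem prod_norm_monomialSum_mul_le [DecidableEq F] (hψ : ψ.IsPrimitive) (hn : n ≠ 0) {e : ℕ}
    {t : ι → F} (ht : #{i | t i = 0} + 2 * e ≤ Fintype.card ι) :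
    (∏ i, ‖monomialSum ψ n (t i)‖) * (Fintype.card F : ℝ) ^ e ≤
      (2 * n * Fintype.card F) ^ Fintype.card ι := by
  set r := √(Fintype.card F : ℝ)
  have hr2 : r ^ 2 = Fintype.card F := Real.sq_sqrt (Nat.cast_nonneg _)
  have hr : 1 ≤ r := by
    rw [Real.one_le_sqrt]
    exact_mod_cast Fintype.card_pos
  have hn1 : (1 : ℝ) ≤ n := by exact_mod_cast hn.pos
  have hfactor (i : ι) :
      ‖monomialSum ψ n (t i)‖ ≤ 2 * n * r * if t i = 0 then r else 1 := by
    split_ifs with hi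
    · rw [hi, monomialSum_zero, Complex.norm_natCast, ← hr2]
      nlinarith [sq_nonneg r]
    · rw [mul_one]
      exact norm_monomialSum_le hψ hn hi
  calc (∏ i, ‖monomialSum ψ n (t i)‖) * (Fintype.card F : ℝ) ^ e
      ≤ (∏ i, 2 * n * r * if t i = 0 then r else 1) * (Fintype.card F : ℝ) ^ e := by
        gcongr with i
        exact hfactor i
    _ = (2 * n * r) ^ Fintype.card ι * r ^ (#{i | t i = 0} + 2 * e) := by
        rw [prod_mul_distrib, prod_const, card_univ, prod_ite, prod_const, prod_const_one, mul_one,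
          ← hr2, pow_add, pow_mul, mul_assoc]
    _ ≤ (2 * n * r) ^ Fintype.card ι * r ^ Fintype.card ι := by gcongr
    _ = (2 * n * Fintype.card F) ^ Fintype.card ι := by
        rw [← mul_pow, ← hr2]
        ring

end CharacterSums

section Counting

variable {F ι κ : Type*} [Field F] [Fintype F] [Fintype ι] [Fintype κ] {A : Matrix κ ι F} {n : ℕ}

theorem card_diagonalZeros_mul_sub_eq_sum [DecidableEq κ] [DecidableEq F] {ψ : AddChar F ℂ}
    (hψ : ψ.IsPrimitive) (A : Matrix κ ι F) (n : ℕ) :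
    (Nat.card (diagonalZeros A n) : ℂ) * Fintype.card F ^ Fintype.card κ -
      (Fintype.card F : ℂ) ^ Fintype.card ι =
      ∑ w ∈ univ.erase 0, ∏ i, monomialSum ψ n ((w ᵥ* A) i) := by
  rw [card_diagonalZeros_mul_eq_sum hψ, ← add_sum_erase univ _ (mem_univ 0)]
  simp [monomialSum_zero]

theorem abs_card_diagonalZeros_mul_sub_le (hn : n ≠ 0) (hA : ∀ w : κ → F, w ≠ 0 →
      Nat.card {i // (w ᵥ* A) i = 0} + 2 * (Fintype.card κ + 1) ≤ Fintype.card ι) :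
    |Nat.card (diagonalZeros A n) * (Fintype.card F : ℝ) ^ Fintype.card κ -
        (Fintype.card F : ℝ) ^ Fintype.card ι| ≤
      (Fintype.card F : ℝ) ^ Fintype.card ι * ((2 * n) ^ Fintype.card ι / Fintype.card F) := by
  classical
  set q : ℝ := (Fintype.card F : ℝ) with hq
  have hq0 : 0 < q := Nat.cast_pos.2 Fintype.card_pos
  let ψ := AddChar.FiniteField.primitiveChar_to_Complex F
  have hψ : ψ.IsPrimitive := AddChar.FiniteField.primitiveChar_to_Complex_isPrimitive F
  set ε : ℝ := (2 * n * q) ^ Fintype.card ι / q ^ (Fintype.card κ + 1) with hε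
  have hterm (w : κ → F) (hw : w ∈ univ.erase 0) :
      ‖∏ i, monomialSum ψ n ((w ᵥ* A) i)‖ ≤ ε := by
    rw [norm_prod, le_div_iff₀ (by positivity)]
    refine prod_norm_monomialSum_mul_le hψ hn ?_
    simpa [Nat.card_eq_fintype_card, Fintype.card_subtype] using hA w (ne_of_mem_erase hw)
  have hcard : (#(univ.erase (0 : κ → F)) : ℝ) ≤ q ^ Fintype.card κ := by
    rw [hq, ← Nat.cast_pow, ← Fintype.card_fun]
    exact_mod_cast card_erase_le
  calc _ = ‖∑ w ∈ univ.erase 0, ∏ i, monomialSum ψ n ((w ᵥ* A) i)‖ := by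
        rw [← card_diagonalZeros_mul_sub_eq_sum hψ, ← Real.norm_eq_abs, ← Complex.norm_real, hq]
        push_cast
        rfl
    _ ≤ #(univ.erase (0 : κ → F)) * ε := by
        rw [← nsmul_eq_mul, ← sum_const]
        exact norm_sum_le_of_le _ hterm
    _ ≤ q ^ Fintype.card κ * ε := by gcongr
    _ = _ := by
        rw [hε, mul_pow, pow_succ]
        field_simp

theorem le_card_diagonalZeros (hn : n ≠ 0) (hA : ∀ w : κ → F, w ≠ 0 →
      Nat.card {i // (w ᵥ* A) i = 0} + 2 * (Fintype.card κ + 1) ≤ Fintype.card ι) :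
    (Fintype.card F : ℝ) ^ Fintype.card ι * (1 - (2 * n) ^ Fintype.card ι / Fintype.card F) ≤
      Nat.card (diagonalZeros A n) * Fintype.card F ^ Fintype.card κ := by
  linarith [neg_le_of_abs_le (abs_card_diagonalZeros_mul_sub_le hn hA)]

theorem ColumnsSpan.card_diagonalZeros_mul (hA : ColumnsSpan A Set.univ)
    (hn : Function.Bijective fun x : F ↦ x ^ n) :
    Nat.card (diagonalZeros A n) * Fintype.card F ^ Fintype.card κ =
      Fintype.card F ^ Fintype.card ι := by
  classical
  let ψ := AddChar.FiniteField.primitiveChar_to_Complex F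
  have hψ : ψ.IsPrimitive := AddChar.FiniteField.primitiveChar_to_Complex_isPrimitive F
  have hvanish (w) (hw : w ∈ univ.erase 0) : ∏ i, monomialSum ψ n ((w ᵥ* A) i) = 0 := by
    obtain ⟨i, hi⟩ : ∃ i, (w ᵥ* A) i ≠ 0 := by
      by_contra! hw0
      exact ne_of_mem_erase hw (hA w fun i _ ↦ hw0 i)
    exact prod_eq_zero (mem_univ i) (monomialSum_eq_zero hψ hn hi)
  have hsum := card_diagonalZeros_mul_sub_eq_sum hψ A n
  rw [sum_eq_zero hvanish, sub_eq_zero] at hsum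
  exact_mod_cast hsum

/-- Weighting `x` by `Fintype.card X` for each of its zeros turns the count into a product over
the coordinates. -/
theorem card_filter_le_card_zeros_mul_pow_le {X : Type*} [Zero X] [Fintype X] [DecidableEq X]
    [DecidableEq ι] (e : ℕ) :
    #{x : ι → X | e ≤ #{i | x i = 0}} * Fintype.card X ^ e ≤
      (2 * Fintype.card X) ^ Fintype.card ι := by
  have hq : 1 ≤ Fintype.card X := Fintype.card_pos
  calc #{x : ι → X | e ≤ #{i | x i = 0}} * Fintype.card X ^ e
      ≤ ∑ x : ι → X with e ≤ #{i | x i = 0}, Fintype.card X ^ #{i | x i = 0} := by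
        rw [← smul_eq_mul]
        refine card_nsmul_le_sum _ _ _ fun x hx ↦ Nat.pow_le_pow_right hq (mem_filter.1 hx).2
    _ ≤ ∑ x : ι → X, Fintype.card X ^ #{i | x i = 0} :=
        sum_le_sum_of_subset (filter_subset ..)
    _ = ∑ x : ι → X, ∏ i, if x i = 0 then Fintype.card X else 1 := by
        simp [prod_ite]
    _ = (∑ a : X, if a = 0 then Fintype.card X else 1) ^ Fintype.card ι := by
        rw [← Fintype.prod_sum fun (_ : ι) (a : X) ↦ if a = 0 then Fintype.card X else 1,
          prod_const, card_univ]
    _ ≤ (2 * Fintype.card X) ^ Fintype.card ι := by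
        gcongr
        rw [sum_ite, sum_const, sum_const, filter_eq', if_pos (mem_univ 0), card_singleton,
          one_smul, smul_eq_mul, mul_one, two_mul]
        gcongr
        exact card_le_univ _

theorem card_singularZeros_mul_le (hA : ∀ w : κ → F, w ≠ 0 →
      Nat.card {i // (w ᵥ* A) i = 0} + (Fintype.card κ + 1) ≤ Fintype.card ι) :
    Nat.card ↑(diagonalZeros A n \ nonsingularZeros A n) * Fintype.card F ^ (Fintype.card κ + 1) ≤
      (2 * Fintype.card F) ^ Fintype.card ι := by
  classical
  refine le_trans ?_ (card_filter_le_card_zeros_mul_pow_le (Fintype.card κ + 1))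
  rw [Nat.card_coe_set_eq, ← Set.ncard_coe_finset, coe_filter_univ]
  refine Nat.mul_le_mul_right _ (Set.ncard_le_ncard fun x hx ↦ ?_)
  have hsupp : ¬ColumnsSpan A (Function.support x) := fun h ↦ hx.2 ⟨hx.1, h⟩
  rw [ColumnsSpan] at hsupp
  push Not at hsupp
  obtain ⟨w, hw, hw0⟩ := hsupp
  have hzeros := hA w hw0
  rw [Nat.card_eq_fintype_card, Fintype.card_subtype] at hzeros
  have hle : #{i | x i ≠ 0} ≤ #{i | (w ᵥ* A) i = 0} :=
    card_le_card <| monotone_filter_right _ fun i _ hi ↦ hw i hi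
  have hcompl := card_filter_add_card_filter_not (s := univ) fun i ↦ x i = 0
  rw [card_univ] at hcompl
  change Fintype.card κ + 1 ≤ #{i | x i = 0}
  lia

theorem card_singularZeros_mul_le_of_bijective (hn : Function.Bijective fun x : F ↦ x ^ n)
    {J : Finset ι} (hJ : ColumnsSpan A J) (hJ' : ∀ j ∈ J, ColumnsSpan A {j}ᶜ) :
    Nat.card ↑(diagonalZeros A n \ nonsingularZeros A n) * Fintype.card F ^ (Fintype.card κ + 1) ≤
      (2 * Fintype.card F) ^ Fintype.card ι := by
  classical
  have hn0 : n ≠ 0 := by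
    rintro rfl
    exact zero_ne_one (hn.1 (by simp : (0 : F) ^ 0 = 1 ^ 0))
  have hcover : diagonalZeros A n \ nonsingularZeros A n ⊆
      ⋃ j ∈ J, {x ∈ diagonalZeros A n | x j = 0} := by
    rintro x ⟨hx, hsing⟩
    obtain ⟨j, hj, hxj⟩ : ∃ j ∈ J, x j = 0 := by
      by_contra! h
      exact hsing ⟨hx, hJ.mono fun j hj ↦ h j hj⟩
    exact Set.mem_biUnion hj ⟨hx, hxj⟩
  have hslice (j) (hj : j ∈ J) : {x ∈ diagonalZeros A n | x j = 0}.ncard *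
      Fintype.card F ^ (Fintype.card κ + 1) = Fintype.card F ^ Fintype.card ι := by
    rw [← diagonalZeros_fromRows_single hn0, ← Nat.card_coe_set_eq]
    simpa using (hJ' j hj).fromRows_single.card_diagonalZeros_mul hn
  calc _ ≤ (∑ j ∈ J, {x ∈ diagonalZeros A n | x j = 0}.ncard) *
        Fintype.card F ^ (Fintype.card κ + 1) := by
        rw [Nat.card_coe_set_eq]
        gcongr
        exact (Set.ncard_le_ncard hcover).trans (Finset.set_ncard_biUnion_le ..)
    _ = #J * Fintype.card F ^ Fintype.card ι := by
        rw [sum_mul, sum_congr rfl hslice, sum_const, smul_eq_mul]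
    _ ≤ 2 ^ Fintype.card ι * Fintype.card F ^ Fintype.card ι := by
        gcongr
        exact (card_le_univ J).trans Nat.lt_two_pow_self.le
    _ = _ := (mul_pow ..).symm

end Counting

section LiftingBound

variable {F ι κ : Type*} [Field F] [Fintype F] [Fintype ι] [Fintype κ] {A : Matrix κ ι F} {n : ℕ}

theorem le_card_nonsingularZeros_of_card_singularZeros_mul_le {C : ℝ}
    (hdiag : (Fintype.card F : ℝ) ^ Fintype.card ι * (1 - C / Fintype.card F) ≤
      Nat.card (diagonalZeros A n) * Fintype.card F ^ Fintype.card κ)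
    (hsing : Nat.card ↑(diagonalZeros A n \ nonsingularZeros A n) *
      Fintype.card F ^ (Fintype.card κ + 1) ≤ (2 * Fintype.card F) ^ Fintype.card ι) :
    (Fintype.card F : ℝ) ^ Fintype.card ι * (1 - (C + 2 ^ Fintype.card ι) / Fintype.card F) ≤
      Nat.card (nonsingularZeros A n) * Fintype.card F ^ Fintype.card κ := by
  have hq : 0 < (Fintype.card F : ℝ) := Nat.cast_pos.2 Fintype.card_pos
  have hcard : Nat.card (diagonalZeros A n) =
      Nat.card ↑(diagonalZeros A n \ nonsingularZeros A n) + Nat.card (nonsingularZeros A n) := by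
    simp only [Nat.card_coe_set_eq]
    exact (Set.ncard_sdiff_add_ncard_of_subset (Set.sep_subset _ _)).symm
  have hsing' : (Nat.card ↑(diagonalZeros A n \ nonsingularZeros A n) : ℝ) *
      Fintype.card F ^ Fintype.card κ ≤
        Fintype.card F ^ Fintype.card ι * (2 ^ Fintype.card ι / Fintype.card F) := by
    rw [← mul_div_assoc, le_div_iff₀ hq, mul_assoc, ← pow_succ, ← mul_pow, mul_comm _ (2 : ℝ)]
    exact_mod_cast hsing
  rw [hcard, Nat.cast_add, add_mul] at hdiag
  rw [add_div, ← sub_sub, mul_sub]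
  linarith

theorem le_card_diagonalZeros_of_le_card_nonsingularZeros {R : Type*} [CommRing R] [Finite R]
    {φ : R →+* F} (hφ : Function.Surjective φ) (hker : RingHom.ker φ ≤ nilradical R)
    (hn : (n : F) ≠ 0) (A : Matrix κ ι R) {δ : ℝ}
    (h : (Fintype.card F : ℝ) ^ Fintype.card ι * δ ≤
      Nat.card (nonsingularZeros (A.map φ) n) * Fintype.card F ^ Fintype.card κ) :
    (Nat.card R : ℝ) ^ Fintype.card ι * δ ≤
      Nat.card (diagonalZeros A n) * Nat.card R ^ Fintype.card κ := by
  have := isLocalHom_of_ker_le_nilradical hφ hker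
  have hlift : (Nat.card (RingHom.ker φ) : ℝ) ^ Fintype.card ι *
      Nat.card (nonsingularZeros (A.map φ) n) ≤
        Nat.card (diagonalZeros A n) * Nat.card (RingHom.ker φ) ^ Fintype.card κ := by
    exact_mod_cast (card_ker_pow_mul_card_le_card_preimage hφ _).trans
      (card_lifts_nonsingularZeros_le hφ hker hn A)
  rw [card_eq_card_ker_mul_card hφ, Nat.card_eq_fintype_card (α := F)]
  push_cast
  calc _ = (Nat.card (RingHom.ker φ) : ℝ) ^ Fintype.card ι *
        (Fintype.card F ^ Fintype.card ι * δ) := by ring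
    _ ≤ Nat.card (RingHom.ker φ) ^ Fintype.card ι *
        (Nat.card (nonsingularZeros (A.map φ) n) * Fintype.card F ^ Fintype.card κ) := by gcongr
    _ ≤ Nat.card (diagonalZeros A n) * Nat.card (RingHom.ker φ) ^ Fintype.card κ *
        Fintype.card F ^ Fintype.card κ := by
        rw [← mul_assoc]
        gcongr
    _ = _ := by ring

theorem rho_pk_lower_bound_large_primes_general {R : Type*} [CommRing R] [Finite R] {φ : R →+* F}
    (hφ : Function.Surjective φ) (hker : RingHom.ker φ ≤ nilradical R) (hn : (n : F) ≠ 0)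
    (A : Matrix κ ι R) (h : GoodType (A.map φ) n) :
    (Nat.card R : ℝ) ^ Fintype.card ι *
        (1 - ((2 * n) ^ Fintype.card ι + 2 ^ Fintype.card ι) / Fintype.card F) ≤
      Nat.card (diagonalZeros A n) * Nat.card R ^ Fintype.card κ := by
  have hn0 : n ≠ 0 := by
    rintro rfl
    exact hn Nat.cast_zero
  refine le_card_diagonalZeros_of_le_card_nonsingularZeros hφ hker hn A
    (le_card_nonsingularZeros_of_card_singularZeros_mul_le ?_ ?_)
  · obtain hA | ⟨hcop, J, hJ, -⟩ := h
    · exact le_card_diagonalZeros hn0 hA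
    · have hcard := (hJ.mono (Set.subset_univ _)).card_diagonalZeros_mul
        (pow_bijective_of_coprime hn0 hcop)
      refine (mul_le_of_le_one_right (by positivity) ?_).trans_eq (by exact_mod_cast hcard.symm)
      exact sub_le_self _ (by positivity)
  · obtain hA | ⟨hcop, J, hJ, hJ'⟩ := h
    · exact card_singularZeros_mul_le fun w hw ↦ by linarith [hA w hw]
    · exact card_singularZeros_mul_le_of_bijective (pow_bijective_of_coprime hn0 hcop) hJ hJ'

end LiftingBound

section IntegerPairs

variable {R F ι : Type*} [CommRing R] [Field F]

/-- The coefficient matrix over `R` of a pair of diagonal forms with integer coefficients. -/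
def pairMatrix (R : Type*) [Ring R] (c d : ι → ℤ) : Matrix (Fin 2) ι R :=
  of ![fun i ↦ c i, fun i ↦ d i]

theorem pairMatrix_map {S : Type*} [CommRing S] (φ : R →+* S) (c d : ι → ℤ) :
    (pairMatrix R c d).map φ = pairMatrix S c d := by
  ext k i
  fin_cases k <;> simp [pairMatrix]

theorem vecMul_pairMatrix (c d : ι → ℤ) (w : Fin 2 → R) (i : ι) :
    (w ᵥ* pairMatrix R c d) i = w 0 * c i + w 1 * d i := by
  simp [pairMatrix, vecMul, dotProduct]

theorem mem_diagonalZeros_pairMatrix [Fintype ι] {c d : ι → ℤ} {n : ℕ} {x : ι → R} :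
    x ∈ diagonalZeros (pairMatrix R c d) n ↔
      ∑ i, (c i : R) * x i ^ n = 0 ∧ ∑ i, (d i : R) * x i ^ n = 0 := by
  simp [diagonalZeros, pairMatrix, dotProduct, funext_iff, Fin.forall_fin_two]

theorem columnsSpan_pairMatrix {c d : ι → ℤ} {S : Set ι} {i j : ι} (hi : i ∈ S) (hj : j ∈ S)
    (hij : ((c i * d j - c j * d i : ℤ) : F) ≠ 0) : ColumnsSpan (pairMatrix F c d) S := by
  refine columnsSpan_of_det_ne_zero (e := ![i, j]) (Fin.forall_fin_two.2 ⟨hi, hj⟩) ?_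
  simpa [det_fin_two, pairMatrix] using hij

theorem exists_columnsSpan_pairMatrix {c d : ι → ℤ} {i j k : ι}
    (hij : ((c i * d j - c j * d i : ℤ) : F) ≠ 0) (hik : ((c i * d k - c k * d i : ℤ) : F) ≠ 0)
    (hjk : ((c j * d k - c k * d j : ℤ) : F) ≠ 0) :
    ∃ J : Finset ι, ColumnsSpan (pairMatrix F c d) J ∧
      ∀ l ∈ J, ColumnsSpan (pairMatrix F c d) {l}ᶜ := by
  classical
  have hne {i j : ι} (hij : ((c i * d j - c j * d i : ℤ) : F) ≠ 0) : i ≠ j := by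
    rintro rfl
    simp at hij
  refine ⟨{i, j}, columnsSpan_pairMatrix (by simp) (by simp) hij, fun l hl ↦ ?_⟩
  obtain rfl | rfl : l = i ∨ l = j := by simpa using hl
  · exact columnsSpan_pairMatrix (hne hij).symm (hne hik).symm hjk
  · exact columnsSpan_pairMatrix (hne hij) (hne hjk).symm hik

theorem ker_castHom_le_nilradical {m N k : ℕ} (hm : m ∣ N) (hN : N ∣ m ^ k) :
    RingHom.ker (ZMod.castHom hm (ZMod m)) ≤ nilradical (ZMod N) := by
  intro x hx
  obtain ⟨a, rfl⟩ := ZMod.intCast_surjective x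
  rw [RingHom.mem_ker, map_intCast, ZMod.intCast_zmod_eq_zero_iff_dvd] at hx
  refine ⟨k, ?_⟩
  change (a : ZMod N) ^ k = 0
  rw [← Int.cast_pow, ZMod.intCast_zmod_eq_zero_iff_dvd]
  exact (Int.natCast_dvd_natCast.2 hN).trans (by simpa using pow_dvd_pow_of_dvd hx k)

theorem goodType_pairMatrix_zmod {p : ℕ} [Fact p.Prime] (hp : 5 ≤ p) {c d : Fin 16 → ℤ}
    (h₁ : p % 3 = 1 → ∀ l m : ZMod p, ¬(l = 0 ∧ m = 0) →
      Nat.card {i : Fin 16 // l * (c i : ZMod p) + m * (d i : ZMod p) = 0} ≤ 9)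
    (h₂ : p % 3 = 2 → ∃ i j k : Fin 16,
      ((c i * d j - c j * d i : ℤ) : ZMod p) ≠ 0 ∧
      ((c i * d k - c k * d i : ℤ) : ZMod p) ≠ 0 ∧
      ((c j * d k - c k * d j : ℤ) : ZMod p) ≠ 0) :
    GoodType (pairMatrix (ZMod p) c d) 3 := by
  have h3p : ¬3 ∣ p := by
    rw [Nat.prime_dvd_prime_iff_eq Nat.prime_three Fact.out]
    lia
  obtain hmod | hmod : p % 3 = 1 ∨ p % 3 = 2 := by lia
  · refine Or.inl fun w hw ↦ ?_
    have hw' : ¬(w 0 = 0 ∧ w 1 = 0) := by simpa [funext_iff, Fin.forall_fin_two] using hw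
    simp only [vecMul_pairMatrix, Fintype.card_fin]
    linarith [h₁ hmod _ _ hw']
  · obtain ⟨i, j, k, hij, hik, hjk⟩ := h₂ hmod
    refine Or.inr ⟨?_, exists_columnsSpan_pairMatrix hij hik hjk⟩
    rw [ZMod.card, Nat.prime_three.coprime_iff_not_dvd]
    lia

end IntegerPairs

/-- Lower bound `ρ(p^k) ≥ p^{14k}(1 − C/p)` for all primes `p ≥ p₀`, under the
`M`-good-type conditions at `p`. -/
theorem rho_pk_lower_bound_large_primes :
    ∃ p₀ : ℕ, p₀.Prime ∧ 3 < p₀ ∧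
      ∃ C : ℝ, 0 < C ∧
        ∀ (p : ℕ) (c d : Fin 16 → ℤ),
          p.Prime → p₀ ≤ p →
          (p % 3 = 1 → ∀ l m : ZMod p, ¬(l = 0 ∧ m = 0) →
            Nat.card {i : Fin 16 // l * (c i : ZMod p) + m * (d i : ZMod p) = 0} ≤ 9) →
          (p % 3 = 2 → ∃ i j k : Fin 16,
            ((c i * d j - c j * d i : ℤ) : ZMod p) ≠ 0 ∧
            ((c i * d k - c k * d i : ℤ) : ZMod p) ≠ 0 ∧
            ((c j * d k - c k * d j : ℤ) : ZMod p) ≠ 0) →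
          ∀ k : ℕ, 1 ≤ k →
            (p : ℝ) ^ (14 * k) * (1 - C / (p : ℝ)) ≤
              (Nat.card {x : Fin 16 → ZMod (p ^ k) //
                (∑ i, (c i : ZMod (p ^ k)) * x i ^ 3) = 0 ∧
                (∑ i, (d i : ZMod (p ^ k)) * x i ^ 3) = 0} : ℝ) := by
  refine ⟨5, by norm_num, by norm_num, (2 * (3 : ℕ)) ^ 16 + 2 ^ 16, by norm_num,
    fun p c d hp hp5 h₁ h₂ k hk ↦ ?_⟩
  have := Fact.mk hp
  have : NeZero (p ^ k) := ⟨pow_ne_zero k hp.ne_zero⟩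
  have hdvd : p ∣ p ^ k := dvd_pow_self p (by lia)
  have h3p : ¬p ∣ 3 := fun h ↦ by linarith [Nat.le_of_dvd three_pos h]
  have hgood := goodType_pairMatrix_zmod hp5 h₁ h₂
  rw [← pairMatrix_map (ZMod.castHom hdvd (ZMod p))] at hgood
  have hbound := rho_pk_lower_bound_large_primes_general (ZMod.castHom_surjective hdvd)
    (ker_castHom_le_nilradical hdvd dvd_rfl) (by rwa [Ne, ZMod.natCast_eq_zero_iff]) _ hgood
  simp only [Nat.card_zmod, ZMod.card, Fintype.card_fin, Nat.cast_pow] at hbound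
  rw [Nat.card_congr (Equiv.subtypeEquivRight fun x ↦ mem_diagonalZeros_pairMatrix.symm)]
  have : 0 < (p : ℝ) := Nat.cast_pos.2 hp.pos
  refine le_of_mul_le_mul_right (hbound.trans_eq' ?_) (by positivity : 0 < ((p : ℝ) ^ k) ^ 2)
  ring
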